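/- Let D = {0,1,2,3} and let F = {f_1, f_2, f_3} be any set of three pairwise distinct binary predicates on D. Then at least one of the following holds: (1) F is supermodular on some chain on D; (2) for some proper subset D' ⊂ D, the set of restrictions of the members of F to D'×D' is not supermodular on any chain on D'; (3) some proper nonempty subset of F is not supermodular on any chain on D. In particular, there is no set F of three binary predicates on a four-element domain such that F is not supermodular on any chain, every proper nonempty subset of F is supermodular on some chain, and for every proper subset D' ⊂ D the restriction of F to D' is supermodular on some chain on D'. -/

import Mathlib

/-- A binary function on `D` is supermodular with respect to a given linear order
`r` on `D` if `g x₁ y₁ + g x₂ y₂ ≤ g (min x₁ x₂) (min y₁ y₂) + g (max x₁ x₂) (max y₁ y₂)`,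
where min and max are taken in the order `r`. -/
def SupermodChain2 {D : Type*} (r : LinearOrder D) (g : D → D → ℤ) : Prop :=
  ∀ x1 y1 x2 y2 : D,
    g x1 y1 + g x2 y2 ≤
      g (r.min x1 x2) (r.min y1 y2) + g (r.max x1 x2) (r.max y1 y2)

/-!
A function that is supermodular on some finite chain determines, up to reversal, a weak order on
its domain, recorded by an integer-valued level function: the function is supermodular on exactly
those chains along which its level function is monotone or antitone. Two functions thus share a
chain iff their level functions vary together or oppositely. If signs can be chosen so that all
levels vary together, sorting the domain by the sum of the levels gives a common chain. Otherwise
three levels vary pairwise oppositely; they then have extreme points `x`, `y`, `z`, each of which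
would have to be an end of any chain on `{x, y, z}` that works for the three restrictions.
-/

section Supermodular

variable {D E : Type*} {f : D → D → ℤ} {φ : D → ℤ}

/-- The mixed second difference of `f` on the rectangle with sides `a, b` and `u, v`; its sign
expresses supermodularity of `f` on that rectangle. -/
def mixedDiff (f : D → D → ℤ) (a b u v : D) : ℤ :=
  f a u + f b v - f a v - f b u

theorem mixedDiff_swap_left (f : D → D → ℤ) (a b u v : D) :
    mixedDiff f b a u v = -mixedDiff f a b u v := by
  unfold mixedDiff; ring

theorem mixedDiff_swap_right (f : D → D → ℤ) (a b u v : D) :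
    mixedDiff f a b v u = -mixedDiff f a b u v := by
  unfold mixedDiff; ring

theorem mixedDiff_swap_swap (f : D → D → ℤ) (a b u v : D) :
    mixedDiff f b a v u = mixedDiff f a b u v := by
  unfold mixedDiff; ring

theorem mixedDiff_add_left (f : D → D → ℤ) (a b c u v : D) :
    mixedDiff f a b u v + mixedDiff f b c u v = mixedDiff f a c u v := by
  unfold mixedDiff; ring

theorem mixedDiff_add_right (f : D → D → ℤ) (a b u v w : D) :
    mixedDiff f a b u v + mixedDiff f a b v w = mixedDiff f a b u w := by
  unfold mixedDiff; ring

theorem supermodChain2_iff_mixedDiff_nonneg (r : LinearOrder D) :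
    SupermodChain2 r f ↔ ∀ a b u v, a ≤ b → u ≤ v → 0 ≤ mixedDiff f a b u v := by
  constructor
  · intro h a b u v hab huv
    have := h a v b u
    rw [min_eq_left hab, max_eq_right hab, min_eq_right huv, max_eq_left huv] at this
    unfold mixedDiff
    linarith
  · intro h a u b v
    unfold mixedDiff at h
    rcases le_total a b with hab | hab <;> rcases le_total u v with huv | huv <;>
      have := h _ _ _ _ hab huv <;> simp only [hab, huv, min_eq_left, min_eq_right, max_eq_left,
        max_eq_right] <;> linarith

theorem SupermodChain2.lt_iff_lt_of_mixedDiff_pos {r : LinearOrder D} (h : SupermodChain2 r f)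
    {a b u v : D} (hpos : 0 < mixedDiff f a b u v) : a < b ↔ u < v := by
  rw [supermodChain2_iff_mixedDiff_nonneg] at h
  constructor <;> intro hlt <;> by_contra! hle
  · have := h a b v u hlt.le hle
    rw [mixedDiff_swap_right] at this
    linarith
  · have := h b a u v hle hlt.le
    rw [mixedDiff_swap_left] at this
    linarith

/-- `φ` attains its minimum at `x` and its maximum at `z`. -/
def Spans (φ : D → ℤ) (x z : D) : Prop :=
  ∀ c, φ c ∈ Set.Icc (φ x) (φ z)

/-- `φ` is a level function of `f`: the weak order that `φ` induces on `D` is, up to reversal, the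
one that supermodularity of `f` imposes on a chain. The field `pos` is stated for arbitrary extreme
points so that it survives restriction to a subset of `D` containing a pair of them. -/
structure IsLevel (f : D → D → ℤ) (φ : D → ℤ) : Prop where
  nonneg : ∀ a b u v, φ a ≤ φ b → φ u ≤ φ v → 0 ≤ mixedDiff f a b u v
  pos : ∀ a b x z, φ a < φ b → Spans φ x z → 0 < mixedDiff f a b x z ∨ 0 < mixedDiff f x z a b

theorem IsLevel.neg (h : IsLevel f φ) : IsLevel f (-φ) where
  nonneg a b u v hab huv := by
    have := h.nonneg b a v u (neg_le_neg_iff.1 hab) (neg_le_neg_iff.1 huv)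
    rwa [mixedDiff_swap_swap] at this
  pos a b x z hab hxz := by
    have := h.pos b a z x (neg_lt_neg_iff.1 hab)
      fun c => ⟨neg_le_neg_iff.1 (hxz c).2, neg_le_neg_iff.1 (hxz c).1⟩
    rwa [mixedDiff_swap_swap f a b, mixedDiff_swap_swap f x z] at this

theorem IsLevel.supermodChain2 (h : IsLevel f φ) (r : LinearOrder D) (hφ : Monotone φ) :
    SupermodChain2 r f :=
  (supermodChain2_iff_mixedDiff_nonneg r).2 fun _ _ _ _ hab huv =>
    h.nonneg _ _ _ _ (hφ hab) (hφ huv)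

theorem IsLevel.lt_iff_lt (h : IsLevel f φ) {e : E → D} {r : LinearOrder E}
    (hr : SupermodChain2 r fun i j => f (e i) (e j)) {x z : E} (hxz : Spans φ (e x) (e z))
    {i j : E} (hij : φ (e i) < φ (e j)) : i < j ↔ x < z := by
  rcases h.pos _ _ _ _ hij hxz with hpos | hpos
  · exact hr.lt_iff_lt_of_mixedDiff_pos hpos
  · exact (hr.lt_iff_lt_of_mixedDiff_pos hpos).symm

theorem IsLevel.monotone_or_antitone [Finite D] (h : IsLevel f φ) {r : LinearOrder D}
    (hr : SupermodChain2 r f) : Monotone φ ∨ Antitone φ := by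
  cases isEmpty_or_nonempty D
  · exact .inl fun a => isEmptyElim a
  obtain ⟨x, hx⟩ := Finite.exists_min φ
  obtain ⟨z, hz⟩ := Finite.exists_max φ
  have hlt {a b : D} : φ a < φ b → (a < b ↔ x < z) :=
    h.lt_iff_lt (e := id) hr fun c => ⟨hx c, hz c⟩
  rcases lt_or_ge x z with hxz | hzx
  · exact .inl fun a b hab => not_lt.1 fun hba => hab.not_gt ((hlt hba).2 hxz)
  · exact .inr fun a b hab => not_lt.1 fun hba => hzx.not_gt <|
      (hlt hba).1 <| hab.lt_of_ne fun heq => hba.ne (congrArg φ heq)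

section BoundedOrder

variable [r : LinearOrder D] [BoundedOrder D] {a b : D}

/-- A level function read off a chain: the share of the elements up to `a`, as first and as
second argument, in the mixed second difference over the whole chain. -/
def chainLevel (f : D → D → ℤ) (a : D) : ℤ :=
  mixedDiff f ⊥ a ⊥ ⊤ + mixedDiff f ⊥ ⊤ ⊥ a

theorem chainLevel_sub_chainLevel (f : D → D → ℤ) (a b : D) :
    chainLevel f b - chainLevel f a = mixedDiff f a b ⊥ ⊤ + mixedDiff f ⊥ ⊤ a b := by
  rw [chainLevel, chainLevel, ← mixedDiff_add_left f ⊥ a b, ← mixedDiff_add_right f ⊥ ⊤ ⊥ a b]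
  ring

theorem SupermodChain2.monotone_chainLevel (h : SupermodChain2 r f) : Monotone (chainLevel f) := by
  intro a b hab
  rw [supermodChain2_iff_mixedDiff_nonneg] at h
  linarith [chainLevel_sub_chainLevel f a b, h a b ⊥ ⊤ hab bot_le, h ⊥ ⊤ a b bot_le hab]

theorem SupermodChain2.mixedDiff_eq_zero (h : SupermodChain2 r f)
    (hab : chainLevel f a = chainLevel f b) (u v : D) :
    mixedDiff f a b u v = 0 ∧ mixedDiff f u v a b = 0 := by
  wlog hle : a ≤ b generalizing a b
  · rw [mixedDiff_swap_left f b a, mixedDiff_swap_right f u v b a, neg_eq_zero, neg_eq_zero]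
    exact this hab.symm (le_of_not_ge hle)
  wlog huv : u ≤ v generalizing u v
  · rw [mixedDiff_swap_right f a b v u, mixedDiff_swap_left f v u, neg_eq_zero, neg_eq_zero]
    exact this v u (le_of_not_ge huv)
  rw [supermodChain2_iff_mixedDiff_nonneg] at h
  have hrow := mixedDiff_add_right f a b ⊥ u ⊤
  have hrow' := mixedDiff_add_right f a b u v ⊤
  have hcol := mixedDiff_add_left f ⊥ u ⊤ a b
  have hcol' := mixedDiff_add_left f u v ⊤ a b
  have hsum := chainLevel_sub_chainLevel f a b
  constructor <;>
    linarith [h a b ⊥ u hle bot_le, h a b u v hle huv, h a b v ⊤ hle le_top,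
      h ⊥ u a b bot_le hle, h u v a b huv hle, h v ⊤ a b le_top hle]

theorem SupermodChain2.isLevel_chainLevel (h : SupermodChain2 r f) :
    IsLevel f (chainLevel f) where
  nonneg a b u v hab huv := by
    rcases le_or_gt a b with hab' | hba
    · rcases le_or_gt u v with huv' | hvu
      · exact (supermodChain2_iff_mixedDiff_nonneg r).1 h _ _ _ _ hab' huv'
      · exact (h.mixedDiff_eq_zero (huv.antisymm (h.monotone_chainLevel hvu.le)) a b).2.ge
    · exact (h.mixedDiff_eq_zero (hab.antisymm (h.monotone_chainLevel hba.le)) u v).1.ge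
  pos a b x z hab hxz := by
    have hx : chainLevel f ⊥ = chainLevel f x :=
      (h.monotone_chainLevel bot_le).antisymm (hxz ⊥).1
    have hz : chainLevel f z = chainLevel f ⊤ :=
      (h.monotone_chainLevel le_top).antisymm (hxz ⊤).2
    have hrow : mixedDiff f a b x z = mixedDiff f a b ⊥ ⊤ := by
      rw [← mixedDiff_add_right f a b ⊥ x ⊤, ← mixedDiff_add_right f a b x z ⊤,
        (h.mixedDiff_eq_zero hx a b).2, (h.mixedDiff_eq_zero hz a b).2, zero_add, add_zero]
    have hcol : mixedDiff f x z a b = mixedDiff f ⊥ ⊤ a b := by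
      rw [← mixedDiff_add_left f ⊥ x ⊤ a b, ← mixedDiff_add_left f x z ⊤ a b,
        (h.mixedDiff_eq_zero hx a b).1, (h.mixedDiff_eq_zero hz a b).1, zero_add, add_zero]
    rw [hrow, hcol]
    by_contra! hle
    linarith [chainLevel_sub_chainLevel f a b]

end BoundedOrder

theorem SupermodChain2.exists_isLevel [Finite D] {r : LinearOrder D} (h : SupermodChain2 r f) :
    ∃ φ, IsLevel f φ := by
  cases isEmpty_or_nonempty D
  · exact ⟨0, fun a => isEmptyElim a, fun a => isEmptyElim a⟩
  have := Fintype.ofFinite D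
  let := Fintype.toBoundedOrder D
  exact ⟨_, h.isLevel_chainLevel⟩

end Supermodular

section Monovary

variable {D : Type*} {φ ψ χ : D → ℤ} {x z : D}

theorem exists_linearOrder_forall_monotone {ι : Type*} {s : Finset ι} {φ : ι → D → ℤ}
    (h : ∀ i ∈ s, ∀ j ∈ s, Monovary (φ i) (φ j)) :
    ∃ _ : LinearOrder D, ∀ i ∈ s, Monotone (φ i) := by
  obtain ⟨r, hsum, -⟩ := (monovary_self fun a => ∑ i ∈ s, φ i a).exists_monotone
  refine ⟨r, fun i hi a b hab => not_lt.1 fun hba => (hsum hab).not_gt ?_⟩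
  exact Finset.sum_lt_sum (fun j hj => h j hj i hi hba) ⟨i, hi, hba⟩

theorem exists_min_max_of_antivary [Finite D] [Nonempty D] (h : Antivary φ ψ) :
    ∃ x, (∀ c, φ x ≤ φ c) ∧ ∀ c, ψ c ≤ ψ x := by
  obtain ⟨x, hx⟩ := Finite.exists_min (φ - ψ)
  simp only [Pi.sub_apply] at hx
  refine ⟨x, fun c => not_lt.1 fun hc => ?_, fun c => not_lt.1 fun hc => ?_⟩
  · linarith [hx c, h.symm hc]
  · linarith [hx c, h hc]

theorem Spans.lt (h : Spans φ x z) (hφ : ∃ a b, φ a < φ b) : φ x < φ z :=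
  let ⟨a, b, hab⟩ := hφ
  ((h a).1.trans_lt hab).trans_le (h b).2

theorem exists_spans_of_antivary [Finite D] (hφψ : Antivary φ ψ) (hψχ : Antivary ψ χ)
    (hχφ : Antivary χ φ) (hφ : ∃ a b, φ a < φ b) (hψ : ∃ a b, ψ a < ψ b)
    (hχ : ∃ a b, χ a < χ b) :
    ∃ x y z, Spans φ x z ∧ Spans ψ y x ∧ Spans χ z y ∧
      (φ x < φ y ∧ ψ y < ψ z ∧ χ z < χ x ∨ φ y < φ z ∧ ψ z < ψ x ∧ χ x < χ y) := by
  have : Nonempty D := ⟨hφ.choose⟩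
  obtain ⟨x, hφx, hψx⟩ := exists_min_max_of_antivary hφψ
  obtain ⟨y, hψy, hχy⟩ := exists_min_max_of_antivary hψχ
  obtain ⟨z, hχz, hφz⟩ := exists_min_max_of_antivary hχφ
  have hφxz : Spans φ x z := fun c => ⟨hφx c, hφz c⟩
  have hψyx : Spans ψ y x := fun c => ⟨hψy c, hψx c⟩
  have hχzy : Spans χ z y := fun c => ⟨hχz c, hχy c⟩
  refine ⟨x, y, z, hφxz, hψyx, hχzy, ?_⟩
  rcases lt_or_ge (φ x) (φ y) with hφxy | hφyx
  · have hχzx : χ z < χ x := (hχzy.lt hχ).trans_le (hχφ hφxy)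
    have hψyz : ψ y < ψ z := (hψyx.lt hψ).trans_le (hψχ hχzx)
    exact .inl ⟨hφxy, hψyz, hχzx⟩
  · have hφyz : φ y < φ z := hφyx.trans_lt (hφxz.lt hφ)
    have hψzx : ψ z < ψ x := (hφψ.symm hφyz).trans_lt (hψyx.lt hψ)
    have hχxy : χ x < χ y := (hψχ.symm hψzx).trans_lt (hχzy.lt hχ)
    exact .inr ⟨hφyz, hψzx, hχxy⟩

end Monovary

section Helly

variable {D : Type*} [Finite D] {f g h : D → D → ℤ} {φ ψ χ : D → ℤ}

theorem IsLevel.monovary_or_antivary (hf : IsLevel f φ) (hg : IsLevel g ψ) {r : LinearOrder D}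
    (hfr : SupermodChain2 r f) (hgr : SupermodChain2 r g) : Monovary φ ψ ∨ Antivary φ ψ := by
  rcases hf.monotone_or_antitone hfr with hφ | hφ <;>
    rcases hg.monotone_or_antitone hgr with hψ | hψ
  · exact .inl (hφ.monovary hψ)
  · exact .inr (hφ.antivary hψ)
  · exact .inr (hφ.antivary hψ)
  · exact .inl (hφ.monovary hψ)

theorem IsLevel.exists_isLevel_monovary (hf : IsLevel f φ) {r : LinearOrder D}
    (hfr : SupermodChain2 r f) (hgr : SupermodChain2 r g) : ∃ ψ, IsLevel g ψ ∧ Monovary φ ψ := by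
  obtain ⟨ψ, hψ⟩ := hgr.exists_isLevel
  rcases hf.monovary_or_antivary hψ hfr hgr with h | h
  · exact ⟨ψ, hψ, h⟩
  · exact ⟨-ψ, hψ.neg, fun _ _ hab => h (neg_lt_neg_iff.1 hab)⟩

theorem IsLevel.exists_triple_of_antivary (hf : IsLevel f φ) (hg : IsLevel g ψ)
    (hh : IsLevel h χ) (hφψ : Antivary φ ψ) (hψχ : Antivary ψ χ) (hχφ : Antivary χ φ)
    (hφ : ∃ a b, φ a < φ b) (hψ : ∃ a b, ψ a < ψ b) (hχ : ∃ a b, χ a < χ b) :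
    ∃ D' : Finset D, D'.card = 3 ∧ ¬ ∃ r : LinearOrder D',
      SupermodChain2 r (fun x y : D' => f x y) ∧ SupermodChain2 r (fun x y : D' => g x y) ∧
        SupermodChain2 r (fun x y : D' => h x y) := by
  classical
  obtain ⟨x, y, z, hφxz, hψyx, hχzy, hsep⟩ := exists_spans_of_antivary hφψ hψχ hχφ hφ hψ hχ
  obtain ⟨hxy, hxz, hyz⟩ : x ≠ y ∧ x ≠ z ∧ y ≠ z := by grind
  refine ⟨{x, y, z}, Finset.card_eq_three.2 ⟨x, y, z, hxy, hxz, hyz, rfl⟩, ?_⟩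
  rintro ⟨r, hfr, hgr, hhr⟩
  let x' : ({x, y, z} : Finset D) := ⟨x, by simp⟩
  let y' : ({x, y, z} : Finset D) := ⟨y, by simp⟩
  let z' : ({x, y, z} : Finset D) := ⟨z, by simp⟩
  have hxy' : x' < y' ∨ y' < x' := lt_or_gt_of_ne (Subtype.coe_ne_coe.1 hxy)
  have hxz' : x' < z' ∨ z' < x' := lt_or_gt_of_ne (Subtype.coe_ne_coe.1 hxz)
  have hyz' : y' < z' ∨ z' < y' := lt_or_gt_of_ne (Subtype.coe_ne_coe.1 hyz)
  rcases hsep with ⟨hφxy, hψyz, hχzx⟩ | ⟨hφyz, hψzx, hχxy⟩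
  · have hx : x' < y' ↔ x' < z' := hf.lt_iff_lt hfr hφxz hφxy
    have hy : y' < z' ↔ y' < x' := hg.lt_iff_lt hgr hψyx hψyz
    have hz : z' < x' ↔ z' < y' := hh.lt_iff_lt hhr hχzy hχzx
    rcases hxy' with _ | _ <;> rcases hxz' with _ | _ <;> rcases hyz' with _ | _ <;> grind
  · have hz : y' < z' ↔ x' < z' := hf.lt_iff_lt hfr hφxz hφyz
    have hx : z' < x' ↔ y' < x' := hg.lt_iff_lt hgr hψyx hψzx
    have hy : x' < y' ↔ z' < y' := hh.lt_iff_lt hhr hχzy hχxy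
    rcases hxy' with _ | _ <;> rcases hxz' with _ | _ <;> rcases hyz' with _ | _ <;> grind

theorem exists_pairwise_monovary_isLevel {F : Finset (D → D → ℤ)}
    (hpair : ∀ f ∈ F, ∀ g ∈ F, ∃ r, SupermodChain2 r f ∧ SupermodChain2 r g)
    (htriple : ∀ D' : Finset D, D'.card = 3 →
      ∃ r : LinearOrder D', ∀ f ∈ F, SupermodChain2 r fun x y : D' => f x y) :
    ∃ φ : (D → D → ℤ) → D → ℤ, (∀ f ∈ F, IsLevel f (φ f)) ∧
      ∀ f ∈ F, ∀ g ∈ F, Monovary (φ f) (φ g) := by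
  have hlevel : ∀ f ∈ F, ∃ φ, IsLevel f φ := fun f hf =>
    let ⟨_, hr, _⟩ := hpair f hf f hf
    hr.exists_isLevel
  by_cases hconst : ∀ f ∈ F, ∀ φ, IsLevel f φ → ∀ a b, φ b ≤ φ a
  · choose! φ hφ using hlevel
    exact ⟨φ, hφ, fun f hf _ _ a b _ => hconst f hf _ (hφ f hf) b a⟩
  push Not at hconst
  obtain ⟨f₀, hf₀, φ₀, hφ₀, hne⟩ := hconst
  have haligned : ∀ f ∈ F, ∃ φ, IsLevel f φ ∧ Monovary φ₀ φ := fun f hf =>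
    let ⟨_, hr₀, hr⟩ := hpair f₀ hf₀ f hf
    hφ₀.exists_isLevel_monovary hr₀ hr
  choose! φ hφ hφ₀φ using haligned
  refine ⟨φ, hφ, fun f hf g hg => ?_⟩
  obtain ⟨r, hfr, hgr⟩ := hpair f hf g hg
  rcases (hφ f hf).monovary_or_antivary (hφ g hg) hfr hgr with hmono | hanti
  · exact hmono
  intro a b hab
  by_contra! hba
  obtain ⟨a₀, b₀, hab₀⟩ := hne
  obtain ⟨D', hD', hno⟩ := hφ₀.neg.exists_triple_of_antivary (hφ f hf) (hφ g hg)
    (fun _ _ h => neg_le_neg (hφ₀φ f hf h)) hanti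
    (fun _ _ h => (hφ₀φ g hg).symm (neg_lt_neg_iff.1 h))
    ⟨b₀, a₀, neg_lt_neg hab₀⟩ ⟨b, a, hba⟩ ⟨a, b, hab⟩
  exact hno ((htriple D' hD').imp fun r hr => ⟨hr f₀ hf₀, hr f hf, hr g hg⟩)

end Helly

theorem no_bad_triple_on_four_elements_general {D : Type*} [Finite D]
    (F : Finset (D → D → ℤ)) :
    (∃ r : LinearOrder D, ∀ f ∈ F, SupermodChain2 r f) ∨
    (∃ D' : Finset D, D'.card = 3 ∧
        ¬ ∃ r : LinearOrder ↥D', ∀ f ∈ F, SupermodChain2 r (fun x y : ↥D' => f x.1 y.1)) ∨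
    (∃ G : Finset (D → D → ℤ), G ⊆ F ∧ G.card ≤ 2 ∧ G.Nonempty ∧
        ¬ ∃ r : LinearOrder D, ∀ f ∈ G, SupermodChain2 r f) := by
  classical
  rw [or_iff_not_imp_right]
  intro hnot
  push Not at hnot
  obtain ⟨htriple, hsub⟩ := hnot
  have hpair : ∀ f ∈ F, ∀ g ∈ F, ∃ r, SupermodChain2 r f ∧ SupermodChain2 r g := by
    intro f hf g hg
    simpa using hsub {f, g} (by simp [Finset.insert_subset_iff, hf, hg]) Finset.card_le_two
      (Finset.insert_nonempty f {g})
  obtain ⟨φ, hφ, hmono⟩ := exists_pairwise_monovary_isLevel hpair htriple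
  obtain ⟨r, hr⟩ := exists_linearOrder_forall_monotone hmono
  exact ⟨r, fun f hf => (hφ f hf).supermodChain2 r (hr f hf)⟩

/-- For any set `F = {f₁, f₂, f₃}` of three pairwise distinct
binary predicates on the four-element domain `D = {0,1,2,3}`, at least one of the
following holds: (1) `F` is supermodular on some chain on `D`; (2) for some proper
subset `D' ⊂ D`, the restriction of `F` to `D' × D'` is not supermodular on any
chain on `D'`; (3) some proper nonempty subset of `F` is not supermodular on any
chain on `D`. -/
theorem no_bad_triple_on_four_elements
    (f1 f2 f3 : Fin 4 → Fin 4 → ℤ)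
    (h01 : ∀ f ∈ ({f1, f2, f3} : Finset (Fin 4 → Fin 4 → ℤ)),
      ∀ x y, f x y = 0 ∨ f x y = 1)
    (h12 : f1 ≠ f2) (h13 : f1 ≠ f3) (h23 : f2 ≠ f3) :
    (∃ r : LinearOrder (Fin 4),
        ∀ f ∈ ({f1, f2, f3} : Finset (Fin 4 → Fin 4 → ℤ)), SupermodChain2 r f) ∨
    (∃ D' : Finset (Fin 4), D' ⊂ Finset.univ ∧
        ¬ ∃ r : LinearOrder ↥D',
            ∀ f ∈ ({f1, f2, f3} : Finset (Fin 4 → Fin 4 → ℤ)),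
              SupermodChain2 r (fun x y : ↥D' => f x.1 y.1)) ∨
    (∃ G : Finset (Fin 4 → Fin 4 → ℤ),
        G ⊂ ({f1, f2, f3} : Finset (Fin 4 → Fin 4 → ℤ)) ∧ G.Nonempty ∧
        ¬ ∃ r : LinearOrder (Fin 4), ∀ f ∈ G, SupermodChain2 r f) := by
  have hcard : ({f1, f2, f3} : Finset (Fin 4 → Fin 4 → ℤ)).card = 3 :=
    Finset.card_eq_three.2 ⟨f1, f2, f3, h12, h13, h23, rfl⟩
  refine (no_bad_triple_on_four_elements_general {f1, f2, f3}).imp_right (.imp ?_ ?_)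
  · rintro ⟨D', hD', h⟩
    exact ⟨D', Finset.ssubset_univ_iff.2 fun heq => by simp [heq] at hD', h⟩
  · rintro ⟨G, hGF, hG, hne, h⟩
    exact ⟨G, hGF.ssubset_of_ne fun heq => by rw [heq] at hG; omega, hne, h⟩
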